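/- arXiv:2503.00556 — 5 statements merged into one kernel-verified Lean document; each statement's English description precedes it below -/
import Mathlib

section
/- (Proposition 2.2, part a) Fix λ₀ > 0 and u₀ ∈ F, and set v₀ = Λ̃ − Λ(u₀). Then u₀ minimizes J_{λ₀} over F if and only if ‖v₀*∘Λ‖_* ≤ 1/(2λ₀) and ⟨v₀, Λ(u₀)⟩_H = ‖u₀‖_F/(2λ₀). -/
open scoped InnerProductSpace

theorem small_aux (a b : ℝ) (hb : 0 ≤ b) (h : ∀ t : ℝ, 0 < t → t < 1 → t * a ≤ t ^ 2 * b) :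
    a ≤ 0 := by
  by_contra hc
  push Not at hc
  have hd : 0 < a + b + b := by linarith
  have ht0 : 0 < a / (2 * (a + b)) := by positivity
  have ht1 : a / (2 * (a + b)) < 1 := by
    rw [div_lt_one (by linarith)]; linarith
  have h1 := h _ ht0 ht1
  have h2 : a ≤ a / (2 * (a + b)) * b := by
    refine le_of_mul_le_mul_left ?_ ht0
    calc _ ≤ _ := h1
      _ = _ := by ring
  rw [div_mul_eq_mul_div, le_div_iff₀ (by linarith)] at h2
  nlinarith [mul_pos hc hc, mul_nonneg hc.le hb]

/-- Proposition 2.2, part a): `u₀` minimizes `J_{λ₀}(u) = λ₀‖Λ̃ - Λ u‖² + ‖u‖_F` over `F`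
if and only if `‖v₀* ∘ Λ‖_* ≤ 1/(2λ₀)` and `⟪v₀, Λ u₀⟫ = ‖u₀‖_F/(2λ₀)`,
where `v₀ = Λ̃ - Λ u₀`. -/
theorem minimizer_characterization
    {H : Type*} [NormedAddCommGroup H] [InnerProductSpace ℝ H]
    {F : Type*} [NormedAddCommGroup F] [NormedSpace ℝ F]
    (Λ : F →L[ℝ] H) (Λt : H)
    (lam0 : ℝ) (hlam0 : 0 < lam0) (u0 : F) :
    (∀ u : F, lam0 * ‖Λt - Λ u0‖ ^ 2 + ‖u0‖ ≤ lam0 * ‖Λt - Λ u‖ ^ 2 + ‖u‖) ↔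
      (‖(innerSL ℝ (Λt - Λ u0)).comp Λ‖ ≤ 1 / (2 * lam0) ∧
        ⟪Λt - Λ u0, Λ u0⟫_ℝ = ‖u0‖ / (2 * lam0)) := by
  have key : ∀ h : F, ‖Λt - Λ (u0 + h)‖ ^ 2
      = ‖Λt - Λ u0‖ ^ 2 - 2 * ⟪Λt - Λ u0, Λ h⟫_ℝ + ‖Λ h‖ ^ 2 := by
    intro h
    rw [map_add, ← sub_sub, norm_sub_sq_real]
  constructor
  · intro hmin
    have hP : ∀ w : F, 2 * lam0 * ⟪Λt - Λ u0, Λ w⟫_ℝ ≤ ‖w‖ := by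
      intro w
      have := small_aux (2 * lam0 * ⟪Λt - Λ u0, Λ w⟫_ℝ - ‖w‖) (lam0 * ‖Λ w‖ ^ 2)
        (by positivity) (by
          intro t ht _
          have h1 := hmin (u0 + t • w)
          rw [key, map_smul, inner_smul_right, norm_smul, mul_pow, Real.norm_eq_abs, sq_abs] at h1
          have h2 := norm_add_le u0 (t • w)
          rw [norm_smul, Real.norm_eq_abs, abs_of_pos ht] at h2
          linarith)
      linarith
    have hQ : ‖u0‖ ≤ 2 * lam0 * ⟪Λt - Λ u0, Λ u0⟫_ℝ := by
      have := small_aux (‖u0‖ - 2 * lam0 * ⟪Λt - Λ u0, Λ u0⟫_ℝ) (lam0 * ‖Λ u0‖ ^ 2)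
        (by positivity) (by
          intro t ht ht1
          have h1 := hmin (u0 + (-t) • u0)
          rw [key, map_smul, inner_smul_right, norm_smul, mul_pow, Real.norm_eq_abs, sq_abs] at h1
          have h2 : ‖u0 + (-t) • u0‖ = (1 - t) * ‖u0‖ := by
            have : u0 + (-t) • u0 = (1 - t) • u0 := by module
            rw [this, norm_smul, Real.norm_eq_abs, abs_of_pos (by linarith)]
          rw [h2] at h1
          linarith)
      linarith
    constructor
    · refine ContinuousLinearMap.opNorm_le_bound _ (by positivity) fun w => ?_
      have h1 := hP w
      have h2 := hP (-w)
      rw [map_neg, inner_neg_right, norm_neg] at h2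
      rw [ContinuousLinearMap.comp_apply, innerSL_apply_apply, Real.norm_eq_abs,
        one_div_mul_eq_div, le_div_iff₀ (by positivity)]
      rcases abs_cases ⟪Λt - Λ u0, Λ w⟫_ℝ with ⟨h, _⟩ | ⟨h, _⟩ <;> rw [h] <;> linarith
    · rw [eq_div_iff (by positivity)]
      linarith [hP u0]
  · rintro ⟨hn, he⟩ u
    have h1 := ((innerSL ℝ (Λt - Λ u0)).comp Λ).le_of_opNorm_le hn u
    rw [ContinuousLinearMap.comp_apply, innerSL_apply_apply, Real.norm_eq_abs,
        one_div_mul_eq_div, le_div_iff₀ (by positivity)] at h1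
    rw [eq_div_iff (by positivity)] at he
    have h2 := mul_le_mul_of_nonneg_right (le_abs_self ⟪Λt - Λ u0, Λ u⟫_ℝ)
      (by positivity : 0 ≤ 2 * lam0)
    have h3 := key (u - u0)
    rw [add_sub_cancel, map_sub Λ u u0, inner_sub_right] at h3
    rw [h3]
    have h4 : 0 ≤ lam0 * ‖Λ u - Λ u0‖ ^ 2 := by positivity
    linarith
end

section
/- (Proposition 2.2, part b) Fix λ₀ > 0. Then u₀ = 0 minimizes J_{λ₀} over F if and only if ‖Λ̃*∘Λ‖_* ≤ 1/(2λ₀), where Λ̃*∘Λ denotes the linear functional u ↦ ⟨Λ̃, Λ(u)⟩_H on F. -/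
open scoped InnerProductSpace

/-- Proposition 2.2, part b): `u₀ = 0` minimizes `J_{λ₀}(u) = λ₀‖Λ̃ - Λ u‖² + ‖u‖_F`
over `F` if and only if `‖Λ̃* ∘ Λ‖_* ≤ 1/(2λ₀)`. -/
theorem zero_minimizer_iff
    {H : Type*} [NormedAddCommGroup H] [InnerProductSpace ℝ H]
    {F : Type*} [NormedAddCommGroup F] [NormedSpace ℝ F]
    (Λ : F →L[ℝ] H) (Λt : H)
    (lam0 : ℝ) (hlam0 : 0 < lam0) :
    (∀ u : F, lam0 * ‖Λt - Λ (0 : F)‖ ^ 2 + ‖(0 : F)‖ ≤ lam0 * ‖Λt - Λ u‖ ^ 2 + ‖u‖) ↔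
      ‖(innerSL ℝ Λt).comp Λ‖ ≤ 1 / (2 * lam0) := by
  constructor
  · intro h
    have key : ∀ u : F, 2 * lam0 * ⟪Λt, Λ u⟫_ℝ ≤ ‖u‖ := by
      intro u
      by_contra hc
      push Not at hc
      set d := 2 * lam0 * ⟪Λt, Λ u⟫_ℝ - ‖u‖ with hd
      have hdpos : 0 < d := by rw [hd]; linarith
      set c := lam0 * ‖Λ u‖ ^ 2 with hcdef
      have hc0 : 0 ≤ c := by positivity
      have hc1 : 0 < c + 1 := by linarith
      set t := d / (c + 1) with ht
      have htpos : 0 < t := div_pos hdpos hc1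
      have htc : t * (c + 1) = d := div_mul_cancel₀ d hc1.ne'
      have h1 := h (t • u)
      rw [map_zero, sub_zero, norm_zero, map_smul, norm_sub_sq_real, inner_smul_right,
        norm_smul, norm_smul, Real.norm_of_nonneg htpos.le] at h1
      have h2 : 0 ≤ t * (t * c - d) := by
        rw [hcdef, hd]
        linarith
      have h3 : t * c - d = -t := by linarith
      rw [h3] at h2
      nlinarith
    refine ContinuousLinearMap.opNorm_le_bound _ (by positivity) fun u => ?_
    have h1 := key u
    have h2 := key (-u)
    rw [map_neg, inner_neg_right, norm_neg] at h2
    rw [ContinuousLinearMap.comp_apply, innerSL_apply_apply, Real.norm_eq_abs, one_div,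
      inv_mul_eq_div, le_div_iff₀ (by positivity)]
    rcases abs_cases ⟪Λt, Λ u⟫_ℝ with ⟨h, _⟩ | ⟨h, _⟩ <;> rw [h] <;> linarith
  · intro h u
    have h1 := ((innerSL ℝ Λt).comp Λ).le_of_opNorm_le h u
    rw [ContinuousLinearMap.comp_apply, innerSL_apply_apply, Real.norm_eq_abs, one_div,
      inv_mul_eq_div, le_div_iff₀ (by positivity)] at h1
    have h2 := mul_le_mul_of_nonneg_right (le_abs_self ⟪Λt, Λ u⟫_ℝ)
      (by positivity : 0 ≤ 2 * lam0)
    rw [map_zero, sub_zero, norm_zero, norm_sub_sq_real]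
    have h3 : 0 ≤ lam0 * ‖Λ u‖ ^ 2 := by positivity
    linarith
end

section
/- (Proposition 2.2, part c) Fix λ₀ > 0 and suppose ‖Λ̃*∘Λ‖_* > 1/(2λ₀), where Λ̃*∘Λ denotes the linear functional u ↦ ⟨Λ̃, Λ(u)⟩_H on F. If u₀ ∈ F minimizes J_{λ₀} over F and v₀ = Λ̃ − Λ(u₀), then ‖v₀*∘Λ‖_* = 1/(2λ₀) and ⟨v₀, Λ(u₀)⟩_H = ‖u₀‖_F/(2λ₀) > 0. -/
open scoped InnerProductSpace

theorem aux_small (d b : ℝ) (hb : 0 ≤ b)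
    (h : ∀ e : ℝ, 0 < e → e ≤ 1 → e * d ≤ e ^ 2 * b) : d ≤ 0 := by
  by_contra! hd
  have hs : 0 < d + b := by linarith
  have he : 0 < d / (d + b) := by positivity
  have h1 := h (d / (d + b)) he (by rw [div_le_one hs]; linarith)
  have h2 : d ≤ d / (d + b) * b := by
    refine le_of_mul_le_mul_left ?_ he
    linarith [h1, sq (d / (d + b))]
  rw [div_mul_eq_mul_div, le_div_iff₀ hs] at h2
  nlinarith

/-- Proposition 2.2, part c): if `‖Λ̃* ∘ Λ‖_* > 1/(2λ₀)` and `u₀` minimizes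
`J_{λ₀}(u) = λ₀‖Λ̃ - Λ u‖² + ‖u‖_F` over `F`, then, with `v₀ = Λ̃ - Λ u₀`,
`‖v₀* ∘ Λ‖_* = 1/(2λ₀)` and `⟪v₀, Λ u₀⟫ = ‖u₀‖_F/(2λ₀) > 0`. -/
theorem minimizer_characterization_saturated
    {H : Type*} [NormedAddCommGroup H] [InnerProductSpace ℝ H]
    {F : Type*} [NormedAddCommGroup F] [NormedSpace ℝ F]
    (Λ : F →L[ℝ] H) (Λt : H)
    (lam0 : ℝ) (hlam0 : 0 < lam0)
    (hbig : 1 / (2 * lam0) < ‖(innerSL ℝ Λt).comp Λ‖)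
    (u0 : F)
    (hmin : ∀ u : F, lam0 * ‖Λt - Λ u0‖ ^ 2 + ‖u0‖ ≤ lam0 * ‖Λt - Λ u‖ ^ 2 + ‖u‖) :
    ‖(innerSL ℝ (Λt - Λ u0)).comp Λ‖ = 1 / (2 * lam0) ∧
      ⟪Λt - Λ u0, Λ u0⟫_ℝ = ‖u0‖ / (2 * lam0) ∧ 0 < ‖u0‖ / (2 * lam0) := by
  have key : ∀ (h : F) (c : ℝ), (∀ e : ℝ, 0 < e → e ≤ 1 → ‖u0 + e • h‖ ≤ ‖u0‖ + e * c) →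
      2 * lam0 * ⟪Λt - Λ u0, Λ h⟫_ℝ ≤ c := by
    intro h c hc
    have := aux_small (2 * lam0 * ⟪Λt - Λ u0, Λ h⟫_ℝ - c) (lam0 * ‖Λ h‖ ^ 2) (by positivity) ?_
    · linarith
    intro e he he1
    have h1 := hmin (u0 + e • h)
    have h2 := hc e he he1
    have h3 : Λt - Λ (u0 + e • h) = (Λt - Λ u0) - e • Λ h := by
      simp only [map_add, map_smul]; abel
    rw [h3, norm_sub_sq_real (Λt - Λ u0), inner_smul_right, norm_smul, mul_pow,
      Real.norm_eq_abs, sq_abs] at h1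
    nlinarith
  have hub : ∀ h : F, 2 * lam0 * ⟪Λt - Λ u0, Λ h⟫_ℝ ≤ ‖h‖ := by
    intro h
    refine key h ‖h‖ fun e he _ => ?_
    refine (norm_add_le _ _).trans ?_
    rw [norm_smul, Real.norm_of_nonneg he.le]
  have hlow : ‖u0‖ ≤ 2 * lam0 * ⟪Λt - Λ u0, Λ u0⟫_ℝ := by
    have := key (-u0) (-‖u0‖) fun e he he1 => by
      have : u0 + e • (-u0) = (1 - e) • u0 := by module
      rw [this, norm_smul, Real.norm_of_nonneg (by linarith)]
      linarith
    rw [map_neg, inner_neg_right] at this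
    linarith
  have hl2 : 0 < 2 * lam0 := by positivity
  have heq : ⟪Λt - Λ u0, Λ u0⟫_ℝ = ‖u0‖ / (2 * lam0) := by
    rw [eq_div_iff hl2.ne']
    linarith [hub u0]
  have hnorm : ‖(innerSL ℝ (Λt - Λ u0)).comp Λ‖ ≤ 1 / (2 * lam0) := by
    refine ContinuousLinearMap.opNorm_le_bound _ (by positivity) fun h => ?_
    rw [ContinuousLinearMap.comp_apply, innerSL_apply_apply, Real.norm_eq_abs, one_div_mul_eq_div,
      le_div_iff₀ hl2]
    have h1 := hub h
    have h2 := hub (-h)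
    rw [map_neg, inner_neg_right, norm_neg] at h2
    rcases abs_cases ⟪Λt - Λ u0, Λ h⟫_ℝ with h3 | h3 <;> rw [h3.1] <;> linarith
  have hu0 : 0 < ‖u0‖ := by
    rw [norm_pos_iff]
    rintro rfl
    rw [map_zero, sub_zero] at hnorm
    linarith
  refine ⟨le_antisymm hnorm ?_, heq, by positivity⟩
  have h1 := ((innerSL ℝ (Λt - Λ u0)).comp Λ).le_opNorm u0
  rw [ContinuousLinearMap.comp_apply, innerSL_apply_apply, heq,
    Real.norm_of_nonneg (by positivity)] at h1
  refine le_of_mul_le_mul_right ?_ hu0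
  rwa [one_div_mul_eq_div]
end

section
/- (Remark 2.1, characterization of the minimizing set) Fix λ₀ > 0 and suppose u₀ ∈ F minimizes J_{λ₀} over F. Then u ∈ F minimizes J_{λ₀} over F if and only if Λ(u − u₀) = 0 and ‖u‖_F = ‖u₀‖_F. -/
open scoped InnerProductSpace

/-- Remark 2.1, characterization of the minimizing set: if `u₀` minimizes
`J_{λ₀}(u) = λ₀‖Λ̃ - Λ u‖² + ‖u‖_F` over `F`, then `u` minimizes `J_{λ₀}` over `F`
if and only if `Λ (u - u₀) = 0` and `‖u‖_F = ‖u₀‖_F`. -/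
theorem minimizing_set_characterization
    {H : Type*} [NormedAddCommGroup H] [InnerProductSpace ℝ H]
    {F : Type*} [NormedAddCommGroup F] [NormedSpace ℝ F]
    (Λ : F →L[ℝ] H) (Λt : H)
    (lam0 : ℝ) (hlam0 : 0 < lam0) (u0 : F)
    (hmin : ∀ u : F, lam0 * ‖Λt - Λ u0‖ ^ 2 + ‖u0‖ ≤ lam0 * ‖Λt - Λ u‖ ^ 2 + ‖u‖) :
    ∀ u : F,
      (∀ w : F, lam0 * ‖Λt - Λ u‖ ^ 2 + ‖u‖ ≤ lam0 * ‖Λt - Λ w‖ ^ 2 + ‖w‖) ↔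
        (Λ (u - u0) = 0 ∧ ‖u‖ = ‖u0‖) := by
  intro u
  constructor
  · intro hu
    have h1 := hu u0
    have h2 := hmin u
    have h3 := hmin ((1 / 2 : ℝ) • (u + u0))
    have e : Λt - Λ ((1 / 2 : ℝ) • (u + u0))
        = (1 / 2 : ℝ) • ((Λt - Λ u) + (Λt - Λ u0)) := by
      rw [map_smul, map_add]
      module
    have e2 : (Λt - Λ u) - (Λt - Λ u0) = -(Λ (u - u0)) := by
      rw [map_sub]
      abel
    have hp := parallelogram_law_with_norm ℝ (Λt - Λ u) (Λt - Λ u0)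
    rw [e2, norm_neg] at hp
    have hn : ‖(1 / 2 : ℝ)‖ = 1 / 2 := by norm_num
    rw [e, norm_smul, norm_smul, hn, mul_pow] at h3
    have ht := norm_add_le u u0
    have hq : ‖Λt - Λ u + (Λt - Λ u0)‖ ^ 2
        = 2 * (‖Λt - Λ u‖ ^ 2 + ‖Λt - Λ u0‖ ^ 2) - ‖Λ (u - u0)‖ ^ 2 := by
      linarith
    rw [hq] at h3
    have hz : lam0 * ‖Λ (u - u0)‖ ^ 2 ≤ 0 := by linarith
    have hz2 : ‖Λ (u - u0)‖ ^ 2 ≤ 0 := by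
      by_contra hc
      push Not at hc
      have := mul_pos hlam0 hc
      linarith
    have h0 : Λ (u - u0) = 0 := by
      have : ‖Λ (u - u0)‖ = 0 := by
        have := le_antisymm hz2 (sq_nonneg _)
        exact pow_eq_zero_iff (two_ne_zero) |>.1 this
      exact norm_eq_zero.1 this
    refine ⟨h0, ?_⟩
    have h4 : Λ u = Λ u0 := by
      rw [map_sub] at h0
      exact sub_eq_zero.1 h0
    rw [h4] at h1 h2
    linarith
  · rintro ⟨h0, hn⟩ w
    have h4 : Λ u = Λ u0 := by
      rw [map_sub] at h0
      exact sub_eq_zero.1 h0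
    rw [h4, hn]
    exact hmin w
end

section
/- (Lemma 2.3, injectivity part) For γ ∈ ℓ¹, one has Λ(γ) = 0 if and only if γ_j = −(b/j)·γ₁ for every j ≥ 2. Since the sequence (−b/j)_{j≥2} is not summable, this forces γ₁ = 0 and hence γ = 0; consequently Λ is injective on ℓ¹, and in particular on F. -/
open scoped ENNReal InnerProductSpace

noncomputable section

/-- `X = ℓ¹` over the positive integers. -/
abbrev X : Type := lp (fun _ : ℕ+ => ℝ) 1

/-- `H = ℓ²` over the positive integers. -/
abbrev Hl : Type := lp (fun _ : ℕ+ => ℝ) 2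

/-- Standard unit vectors of `ℓ¹`. -/
def eX (j : ℕ+) : X := lp.single 1 j 1

/-- Standard unit vectors of `ℓ²`. -/
def eH (j : ℕ+) : Hl := lp.single 2 j 1

lemma eH_apply (j k : ℕ+) : (eH j : ∀ _ : ℕ+, ℝ) k = if k = j then 1 else 0 := by
  unfold eH
  rw [lp.single_apply, Pi.single_apply]

lemma hasSum_coord {ι : Type*} {f : ι → Hl} {a : Hl} (h : HasSum f a) (k : ℕ+) :
    HasSum (fun i => (f i : ∀ _ : ℕ+, ℝ) k) ((a : ∀ _ : ℕ+, ℝ) k) := by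
  exact h.mapL (lp.evalCLM ℝ (fun _ : ℕ+ => ℝ) 2 k)

lemma summable_pnat_geom (r : ℝ) (h0 : 0 ≤ r) (h1 : r < 1) :
    Summable (fun m : ℕ+ => r ^ (m : ℕ)) :=
  (summable_geometric_of_lt_one h0 h1).comp_injective PNat.coe_injective

lemma eta_summable (M c₀ : ℝ) (hM : 2 ≤ M) (hc₀ : 0 < c₀) (η : ℕ+ → ℝ)
    (hη : ∀ j : ℕ+, η j = Real.sqrt (c₀ / M ^ (j : ℕ))) :
    Summable (fun m : ℕ+ => (if 2 ≤ m then η m else 0) • eH m) := by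
  have hr : Real.sqrt (1 / M) < 1 := by
    rw [Real.sqrt_lt' one_pos, div_lt_iff₀ (by linarith)]
    linarith
  refine Summable.of_norm_bounded
    (g := fun m : ℕ+ => Real.sqrt c₀ * (Real.sqrt (1 / M)) ^ (m : ℕ))
    ((summable_pnat_geom _ (Real.sqrt_nonneg _) hr).mul_left _) ?_
  intro m
  have he : ‖eH m‖ = 1 := by
    unfold eH
    rw [lp.norm_single (by norm_num)]
    simp
  have hm : η m = Real.sqrt c₀ * (Real.sqrt (1 / M)) ^ (m : ℕ) := by
    have hMp : 0 < M := by linarith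
    rw [hη, Real.sqrt_eq_iff_mul_self_eq_of_pos (by positivity)]
    calc _ = (Real.sqrt c₀ * Real.sqrt c₀) * (Real.sqrt (1 / M) * Real.sqrt (1 / M)) ^ (m : ℕ) := by
          rw [mul_pow]; ring
      _ = _ := by
          rw [Real.mul_self_sqrt hc₀.le, Real.mul_self_sqrt (by positivity), one_div, inv_pow]
          rfl
  rw [norm_smul, he, mul_one, ← hm]
  have : 0 ≤ η m := by rw [hη]; exact Real.sqrt_nonneg _
  split_ifs
  · rw [Real.norm_of_nonneg this]
  · simpa using this

lemma not_summable_pnat_inv : ¬ Summable (fun m : ℕ+ => 1 / (m : ℝ)) := by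
  intro h
  have h2 : Summable (fun n : ℕ => 1 / ((n : ℝ) + 1)) := by
    have := (Equiv.pnatEquivNat.symm.summable_iff).2 h
    refine this.congr ?_
    intro n
    simp [Equiv.pnatEquivNat]
  have h3 := (summable_nat_add_iff (f := fun n : ℕ => 1 / (n : ℝ)) 1).1 (by
    simpa using h2)
  exact Real.not_summable_one_div_natCast h3

lemma zero_of_rel (b : ℝ) (hb : 0 < b) (γ : X)
    (h : ∀ j : ℕ+, 2 ≤ j → γ j = -(b / (j : ℝ)) * γ 1) : γ = 0 := by
  have hs : Summable (fun j : ℕ+ => ‖γ j‖) := by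
    have := (lp.memℓp γ).summable (by norm_num)
    simpa using this
  have h1 : γ 1 = 0 := by
    by_contra hne
    have hpos : 0 < ‖γ 1‖ := norm_pos_iff.2 hne
    apply not_summable_pnat_inv
    have hb' := hs.mul_left (1 / (b * ‖γ 1‖))
    refine (summable_congr_cofinite ?_).1 hb'
    have : ∀ᶠ j : ℕ+ in Filter.cofinite, j ≠ 1 := by
      simp [Filter.eventually_cofinite]
    filter_upwards [this] with j hj
    have hj2 : 2 ≤ j := by
      have h1j : 1 < j := lt_of_le_of_ne one_le (Ne.symm hj)
      exact PNat.add_one_le_iff.2 h1j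
    have hjp : (0 : ℝ) < (j : ℝ) := by exact_mod_cast j.pos
    rw [h j hj2, norm_mul, norm_neg, Real.norm_of_nonneg (by positivity : 0 ≤ b / (j : ℝ))]
    field_simp
  ext j
  by_cases hj : j = 1
  · subst hj; simpa using h1
  · have h1j : 1 < j := lt_of_le_of_ne one_le (Ne.symm hj)
    rw [h j (PNat.add_one_le_iff.2 h1j), h1]
    simp

/-- Lemma 2.3, injectivity part: for `γ ∈ ℓ¹` one has `Λ(γ) = 0` if and only if
`γ_j = -(b/j)·γ₁` for every `j ≥ 2`; moreover `Λ(γ) = 0` forces `γ = 0`,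
hence `Λ` is injective on `ℓ¹`. -/
theorem lambda_injective
    (M α₀ c₀ b δ : ℝ) (hM : 2 ≤ M) (hα₀ : 0 < α₀) (hc₀ : 0 < c₀) (hb : 0 < b)
    (hδ0 : 0 < δ) (hδ1 : δ < 1)
    (η μ : ℕ+ → ℝ)
    (hη : ∀ j : ℕ+, η j = Real.sqrt (c₀ / M ^ (j : ℕ)))
    (hμ : ∀ j : ℕ+, μ j = -δ * η j)
    (Λ : X →L[ℝ] Hl)
    (hΛ1 : Λ (eX 1) = (∑' m : ℕ+, (if 2 ≤ m then η m else 0) • eH m) + μ 2 • eH 2)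
    (hΛj : ∀ j : ℕ+, 2 ≤ j →
      Λ (eX j) = ((j : ℝ) / b) • ((η j + μ j) • eH j - μ (j + 1) • eH (j + 1)))
    (hΛsum : ∀ γ : X, HasSum (fun j : ℕ+ => γ j • Λ (eX j)) (Λ γ)) :
    (∀ γ : X, Λ γ = 0 ↔ ∀ j : ℕ+, 2 ≤ j → γ j = -(b / (j : ℝ)) * γ 1) ∧
    (∀ γ : X, Λ γ = 0 → γ = 0) ∧
    Function.Injective Λ := by
  have hηpos : ∀ j, 0 < η j := by
    intro j
    rw [hη]
    exact Real.sqrt_pos.2 (by positivity)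
  have hsum := eta_summable M c₀ hM hc₀ η hη
  have hc1 : ∀ k : ℕ+, (Λ (eX 1) : ∀ _ : ℕ+, ℝ) k
      = (if 2 ≤ k then η k else 0) + μ 2 * (if k = 2 then 1 else 0) := by
    intro k
    have h1 := (hasSum_coord hsum.hasSum k)
    have h2 : HasSum (fun m : ℕ+ =>
        (((if 2 ≤ m then η m else 0) • eH m : Hl) : ∀ _ : ℕ+, ℝ) k)
        (((if 2 ≤ k then η k else 0) • eH k : Hl) k) := by
      apply hasSum_single
      intro m hm
      rw [lp.coeFn_smul, Pi.smul_apply, eH_apply, if_neg (Ne.symm hm), smul_zero]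
    rw [hΛ1, lp.coeFn_add, Pi.add_apply, h1.unique h2, lp.coeFn_smul, lp.coeFn_smul,
      Pi.smul_apply, Pi.smul_apply, eH_apply, eH_apply]
    simp
  have hcj : ∀ j : ℕ+, 2 ≤ j → ∀ k : ℕ+, (Λ (eX j) : ∀ _ : ℕ+, ℝ) k
      = ((j : ℝ) / b) * ((η j + μ j) * (if k = j then 1 else 0)
        - μ (j + 1) * (if k = j + 1 then 1 else 0)) := by
    intro j hj k
    rw [hΛj j hj]
    simp only [lp.coeFn_smul, lp.coeFn_sub, Pi.smul_apply, Pi.sub_apply, eH_apply, smul_eq_mul]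
  have two_le : ∀ j : ℕ+, j ≠ 1 → 2 ≤ j := fun j hj =>
    PNat.add_one_le_iff.2 (lt_of_le_of_ne one_le (Ne.symm hj))
  have hrel : ∀ γ : X, Λ γ = 0 → ∀ j : ℕ+, 2 ≤ j → γ j = -(b / (j : ℝ)) * γ 1 := by
    intro γ hγ
    have hco : ∀ k : ℕ+, HasSum (fun j : ℕ+ => γ j * (Λ (eX j) : ∀ _ : ℕ+, ℝ) k) 0 := by
      intro k
      have := hasSum_coord (hΛsum γ) k
      rw [hγ] at this
      simpa using this
    have key : ∀ k : ℕ+, 0 < η k + μ k := by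
      intro k
      rw [hμ]
      nlinarith [hηpos k]
    intro j hj
    induction j using PNat.recOn with
    | one => exact absurd hj (by decide)
    | succ n ih =>
      by_cases hn : n = 1
      · subst hn
        have h2 : HasSum (fun j : ℕ+ => γ j * (Λ (eX j) : ∀ _ : ℕ+, ℝ) 2)
            (∑ j ∈ ({1, 2} : Finset ℕ+), γ j * (Λ (eX j) : ∀ _ : ℕ+, ℝ) 2) := by
          apply hasSum_sum_of_ne_finset_zero
          intro j hj
          simp only [Finset.mem_insert, Finset.mem_singleton, not_or] at hj
          have hne : (2 : ℕ+) ≠ j + 1 := by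
            intro h
            exact hj.1 (add_right_cancel (b := 1) h.symm)
          rw [hcj j (two_le j hj.1), if_neg (Ne.symm hj.2), if_neg hne]
          ring
        have h3 := h2.unique (hco 2)
        rw [Finset.sum_pair (by decide), hc1, hcj 2 le_rfl, if_pos le_rfl, if_pos rfl,
          if_neg (by decide)] at h3
        have hk := key 2
        have h4 : (η 2 + μ 2) * (γ 1 + γ 2 * (2 / b)) = 0 := by
          have : (((2 : ℕ+) : ℕ) : ℝ) = 2 := by norm_num
          rw [this] at h3
          linear_combination h3
        have h5 := (mul_eq_zero.1 h4).resolve_left hk.ne'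
        change γ 2 = -(b / (((2 : ℕ+) : ℕ) : ℝ)) * γ 1
        have : (((2 : ℕ+) : ℕ) : ℝ) = 2 := by norm_num
        rw [this]
        field_simp at h5 ⊢
        linarith
      · have hn2 := two_le n hn
        have ihn := ih hn2
        have hlt : n < n + 1 := PNat.lt_add_right n 1
        have hn1 : n + 1 ≠ 2 := (lt_of_le_of_lt hn2 hlt).ne'
        have hn3 : n + 1 ≠ n + 1 + 1 := (PNat.lt_add_right (n + 1) 1).ne
        have hn4 : (1 : ℕ+) ≠ n + 1 := (lt_of_le_of_lt one_le hlt).ne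
        have h2 : HasSum (fun j : ℕ+ => γ j * (Λ (eX j) : ∀ _ : ℕ+, ℝ) (n + 1))
            (∑ j ∈ ({1, n, n + 1} : Finset ℕ+),
              γ j * (Λ (eX j) : ∀ _ : ℕ+, ℝ) (n + 1)) := by
          apply hasSum_sum_of_ne_finset_zero
          intro j hj
          simp only [Finset.mem_insert, Finset.mem_singleton, not_or] at hj
          have hne : n + 1 ≠ j + 1 := by
            intro h
            exact hj.2.1 (add_right_cancel h.symm)
          rw [hcj j (two_le j hj.1), if_neg (Ne.symm hj.2.2), if_neg hne]
          ring
        have h3 := h2.unique (hco (n + 1))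
        rw [Finset.sum_insert (by simp [Ne.symm hn, hn4]), Finset.sum_pair hlt.ne, hc1,
          hcj n hn2, hcj (n + 1) hj, if_pos hj, if_neg hn1, if_neg hlt.ne', if_pos rfl,
          if_neg hn3, ihn] at h3
        have hk := key (n + 1)
        have hnp : (0 : ℝ) < (n : ℝ) := by exact_mod_cast n.pos
        have hnp1 : (0 : ℝ) < ((n + 1 : ℕ+) : ℝ) := by exact_mod_cast (n + 1).pos
        have hc : b / (n : ℝ) * ((n : ℝ) / b) = 1 := by field_simp
        have h4 : (η (n + 1) + μ (n + 1)) *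
            (γ 1 + γ (n + 1) * (((n + 1 : ℕ+) : ℝ) / b)) = 0 := by
          linear_combination h3 - γ 1 * μ (n + 1) * hc
        have h5 := (mul_eq_zero.1 h4).resolve_left hk.ne'
        field_simp at h5 ⊢
        linarith
  have hz : ∀ γ : X, Λ γ = 0 → γ = 0 := fun γ h => zero_of_rel b hb γ (hrel γ h)
  refine ⟨fun γ => ⟨hrel γ, fun h => ?_⟩, hz, ?_⟩
  · rw [zero_of_rel b hb γ h, map_zero]
  · exact (injective_iff_map_eq_zero Λ).2 hz

end
end
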